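/- Let m and n be positive even integers. Then the number N(m,n) of perfect matchings of the m-by-n grid graph satisfies N(m,n) = ∏_{j=1}^{m/2} ∏_{k=1}^{n/2} (4 cos²(πj/(m+1)) + 4 cos²(πk/(n+1))). -/

import Mathlib

open Real

/-- The m-by-n grid graph on vertex set `Fin m × Fin n`: two vertices are
adjacent iff they differ by exactly 1 in one coordinate and agree in the other. -/
def gridGraph (m n : ℕ) : SimpleGraph (Fin m × Fin n) :=
  SimpleGraph.fromRel (fun p q =>
    (p.1 = q.1 ∧ p.2.val + 1 = q.2.val) ∨ (p.2 = q.2 ∧ p.1.val + 1 = q.1.val))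

/-- The number of perfect matchings of a graph. -/
noncomputable def numPerfectMatchings {V : Type*} (G : SimpleGraph V) : ℕ :=
  {M : G.Subgraph | M.IsPerfectMatching}.ncard


namespace Kast

/-- sign of `b - a` -/
def sg (a b : ℕ) : ℤ := Int.sign ((b : ℤ) - a)

lemma sg_anti (a b : ℕ) : sg a b = - sg b a := by
  unfold sg
  rw [← Int.sign_neg]; congr 1; ring

lemma sg_lt {a b : ℕ} (h : a < b) : sg a b = 1 := by
  unfold sg; apply Int.sign_eq_one_of_pos; omega

lemma sg_gt {a b : ℕ} (h : b < a) : sg a b = -1 := by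
  unfold sg; apply Int.sign_eq_neg_one_of_neg; omega

lemma sg_sq {a b : ℕ} (h : a ≠ b) : sg a b * sg a b = 1 := by
  rcases lt_or_gt_of_ne h with h | h
  · simp [sg_lt h]
  · simp [sg_gt h]

/-- crossing sign of the arcs `{a,b}` and `{c,d}` -/
def cr (a b c d : ℕ) : ℤ := sg a c * sg b d * (sg a d * sg b c)

lemma prod_sq_one {α : Type*} (s : Finset α) (f : α → ℤ) (h : ∀ i ∈ s, f i * f i = 1) :
    (∏ i ∈ s, f i) * (∏ i ∈ s, f i) = 1 := by
  rw [← Finset.prod_mul_distrib]; exact Finset.prod_eq_one h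

lemma sign_cross {k : ℕ} (x w : Fin k → ℕ) (hx : Function.Injective x)
    (hw : Function.Injective w) (hxw : ∀ i j, x i ≠ w j) :
    ∃ C : ℤ, C * C = 1 ∧ ∀ σ : Equiv.Perm (Fin k),
      (Equiv.Perm.sign σ : ℤ) * ∏ i, sg (x i) (w (σ i)) =
        C * ∏ i, ∏ j ∈ Finset.Ioi i, cr (x i) (w (σ i)) (x j) (w (σ j)) := by
  set X : ℤ := ∏ i, ∏ j ∈ Finset.Ioi i, sg (x i) (x j) with hX
  set W : ℤ := ∏ i, ∏ j ∈ Finset.Ioi i, sg (w i) (w j) with hW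
  set T : ℤ := ∏ i, ∏ j, sg (x i) (w j) with hT
  set O : ℤ := ∏ i : Fin k, ∏ j ∈ Finset.Ioi i, (-1 : ℤ) with hO
  have X2 : X * X = 1 := prod_sq_one _ _ fun i _ => prod_sq_one _ _ fun j hj =>
    sg_sq (fun h => (Finset.mem_Ioi.1 hj).ne (hx h))
  have W2 : W * W = 1 := prod_sq_one _ _ fun i _ => prod_sq_one _ _ fun j hj =>
    sg_sq (fun h => (Finset.mem_Ioi.1 hj).ne (hw h))
  have T2 : T * T = 1 := prod_sq_one _ _ fun i _ => prod_sq_one _ _ fun j hj =>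
    sg_sq (hxw i j)
  have O2 : O * O = 1 := prod_sq_one _ _ fun i _ => prod_sq_one _ _ fun j hj => by norm_num
  refine ⟨X * W * T * O, ?_, fun σ => ?_⟩
  · calc _ = (X * X) * (W * W) * (T * T) * (O * O) := by ring
      _ = 1 := by rw [X2, W2, T2, O2]; norm_num
  have h1 : ∏ i, ∏ j ∈ Finset.Ioi i, sg (w (σ i)) (w (σ j)) = (Equiv.Perm.sign σ : ℤ) * W := by
    have := Equiv.Perm.prod_Ioi_comp_eq_sign_mul_prod (R := ℤ) σ
      (f := fun i j => sg (w i) (w j)) (fun i j => sg_anti _ _)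
    simpa using this
  have h2 : ∏ i, ∏ j ∈ Finset.Ioi i, (sg (x i) (w (σ j)) * sg (w (σ i)) (x j)) =
      O * ∏ i, ∏ j ∈ ({i} : Finset (Fin k))ᶜ, sg (x j) (w (σ i)) := by
    rw [← Finset.prod_prod_Ioi_mul_eq_prod_prod_off_diag (fun i j => sg (x i) (w (σ j))), hO,
      ← Finset.prod_mul_distrib]
    refine Finset.prod_congr rfl fun i _ => ?_
    rw [← Finset.prod_mul_distrib]
    refine Finset.prod_congr rfl fun j _ => ?_
    rw [sg_anti (w (σ i)) (x j)]; ring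
  have h3 : T = (∏ i, sg (x i) (w (σ i))) *
      ∏ i, ∏ j ∈ ({i} : Finset (Fin k))ᶜ, sg (x j) (w (σ i)) := by
    rw [hT, Finset.prod_comm, ← Equiv.prod_comp σ, ← Finset.prod_mul_distrib]
    refine Finset.prod_congr rfl fun i _ => ?_
    exact Fintype.prod_eq_mul_prod_compl i _
  have h4 : ∏ i, ∏ j ∈ Finset.Ioi i, cr (x i) (w (σ i)) (x j) (w (σ j)) =
      X * ((Equiv.Perm.sign σ : ℤ) * W) *
        (O * ∏ i, ∏ j ∈ ({i} : Finset (Fin k))ᶜ, sg (x j) (w (σ i))) := by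
    rw [← h1, ← h2, hX]
    simp only [cr, Finset.prod_mul_distrib]
  rw [h4]
  set P := ∏ i, sg (x i) (w (σ i))
  set R := ∏ i, ∏ j ∈ ({i} : Finset (Fin k))ᶜ, sg (x j) (w (σ i))
  have R2 : R * R = 1 := prod_sq_one _ _ fun i _ => prod_sq_one _ _ fun j hj =>
    sg_sq (hxw _ _)
  calc _ = (X * X) * (W * W) * (O * O) * (R * R) * (Equiv.Perm.sign σ : ℤ) * P := by
        rw [X2, W2, O2, R2]; ring
    _ = _ := by rw [h3]; ring

lemma prod_pairs {k : ℕ} (a : Fin k → ℕ) (ha : Function.Injective a) (c : Fin k → Fin k → ℤ)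
    (hc : ∀ i j, c i j = c j i) :
    ∏ i, ∏ j ∈ Finset.Ioi i, c i j = ∏ i, ∏ j ∈ Finset.univ.filter (fun j => a i < a j), c i j := by
  rw [Finset.prod_sigma', Finset.prod_sigma']
  refine Finset.prod_nbij' (fun p => if a p.1 < a p.2 then ⟨p.1, p.2⟩ else ⟨p.2, p.1⟩)
    (fun p => if p.1 < p.2 then ⟨p.1, p.2⟩ else ⟨p.2, p.1⟩) ?_ ?_ ?_ ?_ ?_
  · rintro ⟨i, j⟩ h
    simp only [Finset.mem_sigma, Finset.mem_univ, Finset.mem_Ioi, true_and] at h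
    have : a i ≠ a j := fun e => h.ne (ha e)
    by_cases h' : a i < a j <;> simp [h']; omega
  · rintro ⟨i, j⟩ h
    simp only [Finset.mem_sigma, Finset.mem_univ, Finset.mem_filter, true_and] at h
    have : i ≠ j := by rintro rfl; omega
    by_cases h' : i < j <;> simp [h']; omega
  · rintro ⟨i, j⟩ h
    simp only [Finset.mem_sigma, Finset.mem_univ, Finset.mem_Ioi, true_and] at h
    by_cases h' : a i < a j <;> simp [h', h, h.le]
  · rintro ⟨i, j⟩ h
    simp only [Finset.mem_sigma, Finset.mem_univ, Finset.mem_filter, true_and] at h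
    by_cases h' : i < j <;> simp [h', h, h.le]
  · rintro ⟨i, j⟩ h
    by_cases h' : a i < a j <;> simp [h']
    exact hc _ _

lemma cr_symm (a b c d : ℕ) : cr a b c d = cr c d a b := by
  unfold cr
  rw [sg_anti c a, sg_anti d b, sg_anti c b, sg_anti d a]; ring

/-- indicator sign: `-1` if `z < b`. -/
def ind (z b : ℕ) : ℤ := if z < b then -1 else 1

/-- weight of an edge -/
def wt (a b : ℕ) : ℤ := if b = a + 1 ∨ a = b + 1 then 1 else (-1) ^ (max a b + 1)

lemma cross_prod {k n : ℕ} (hn : 2 ≤ n) (x y : Fin k → ℕ)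
    (hx : Function.Injective x) (hy : Function.Injective y) (hxy : ∀ i j, x i ≠ y j)
    (hcount : ∀ i b, (b = x i ∨ b = y i) → ∏ j, (ind (x j) b * ind (y j) b) = (-1) ^ b)
    (hadj : ∀ i, y i = x i + 1 ∨ x i = y i + 1 ∨ y i = x i + n ∨ x i = y i + n) :
    ∏ i, ∏ j ∈ Finset.Ioi i, cr (x i) (y i) (x j) (y j) = ∏ i, wt (x i) (y i) := by
  have hinj : Function.Injective (fun i => min (x i) (y i)) := by
    intro i j h
    by_contra hne
    have h1 := hx.ne hne
    have h2 := hy.ne hne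
    have h3 := hxy i j
    have h4 := hxy j i
    simp only at h
    omega
  rw [prod_pairs (fun i => min (x i) (y i)) hinj _ (fun i j => cr_symm _ _ _ _)]
  refine Finset.prod_congr rfl fun i _ => ?_
  -- crossings of later dominoes
  have key : ∀ j, min (x i) (y i) < min (x j) (y j) →
      cr (x i) (y i) (x j) (y j) =
        ind (x j) (max (x i) (y i)) * ind (y j) (max (x i) (y i)) := by
    intro j hj
    have hne : i ≠ j := by rintro rfl; exact lt_irrefl _ hj
    have h1 := hx.ne hne
    have h2 := hy.ne hne
    have h3 := hxy i j
    have h4 := hxy j i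
    have h5 := hxy i i
    unfold cr ind
    rcases lt_or_gt_of_ne h5 with h | h
    · rw [sg_lt (show x i < x j by omega), sg_lt (show x i < y j by omega), max_eq_right h.le]
      rcases lt_or_gt_of_ne h2 with h6 | h6 <;> rcases lt_or_gt_of_ne h4 with h7 | h7 <;>
        simp [sg_lt, sg_gt, h6, h7, h6.le, h7.le, not_lt.2]
    · rw [sg_lt (show y i < x j by omega), sg_lt (show y i < y j by omega), max_eq_left h.le]
      rcases lt_or_gt_of_ne h1 with h6 | h6 <;> rcases lt_or_gt_of_ne h3 with h7 | h7 <;>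
        simp [sg_lt, sg_gt, h6, h7, h6.le, h7.le, not_lt.2]
  rw [Finset.prod_congr rfl (fun j hj => key j (Finset.mem_filter.1 hj).2)]
  have h5 := hxy i i
  unfold wt
  split_ifs with hh
  · refine Finset.prod_eq_one fun j hj => ?_
    have := (Finset.mem_filter.1 hj).2
    unfold ind
    rw [if_neg (by omega), if_neg (by omega)]; norm_num
  · have hv : max (x i) (y i) = min (x i) (y i) + n := by
      have := hadj i; omega
    set b := max (x i) (y i) with hb
    have hc := hcount i b (by omega)
    have hsplit : ∏ j, (ind (x j) b * ind (y j) b) =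
        (∏ j ∈ Finset.univ.filter (fun j => min (x i) (y i) < min (x j) (y j)),
          ind (x j) b * ind (y j) b) *
        (∏ j ∈ Finset.univ.filter (fun j => ¬ min (x i) (y i) < min (x j) (y j)),
          ind (x j) b * ind (y j) b) := (Finset.prod_filter_mul_prod_filter_not _ _ _).symm
    have hlow : (∏ j ∈ Finset.univ.filter (fun j => ¬ min (x i) (y i) < min (x j) (y j)),
          ind (x j) b * ind (y j) b) = -1 := by
      rw [Finset.prod_eq_single_of_mem i
        (Finset.mem_filter.2 ⟨Finset.mem_univ _, lt_irrefl _⟩)]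
      · unfold ind
        rcases lt_or_gt_of_ne h5 with h | h
        · rw [if_pos (by omega), if_neg (by omega)]; norm_num
        · rw [if_neg (by omega), if_pos (by omega)]; norm_num
      · intro j hj hji
        have h1 := hx.ne hji
        have h2 := hy.ne hji
        have h3 := hxy i j
        have h4 := hxy j i
        have h6 := (Finset.mem_filter.1 hj).2
        have h7 := hadj j
        unfold ind
        rw [if_pos (by omega), if_pos (by omega)]; norm_num
    rw [hlow, hc] at hsplit
    rw [pow_succ, hsplit]; ring

open Kronecker

/-- signed path matrix -/
def Qz (n : ℕ) : Matrix (Fin n) (Fin n) ℤ := fun c d =>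
  if c.val + 1 = d.val then 1 else if d.val + 1 = c.val then -1 else 0

/-- alternating diagonal matrix -/
def Ez (n : ℕ) : Matrix (Fin n) (Fin n) ℤ := Matrix.diagonal fun c => (-1) ^ (c.val + 1)

/-- Kasteleyn matrix -/
def Kz (m n : ℕ) : Matrix (Fin m × Fin n) (Fin m × Fin n) ℤ :=
  (1 : Matrix (Fin m) (Fin m) ℤ) ⊗ₖ Qz n + Qz m ⊗ₖ Ez n

lemma Kz_apply (m n : ℕ) (v w : Fin m × Fin n) :
    Kz m n v w = (if v.1 = w.1 then 1 else 0) * Qz n v.2 w.2 +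
      Qz m v.1 w.1 * (if v.2 = w.2 then (-1) ^ (v.2.val + 1) else 0) := by
  simp only [Kz, Ez, Matrix.add_apply, Matrix.kroneckerMap_apply, Matrix.one_apply,
    Matrix.diagonal_apply]

lemma Qz_anti (n : ℕ) (c d : Fin n) : Qz n c d = - Qz n d c := by
  unfold Qz
  split_ifs <;> omega

lemma Kz_anti (m n : ℕ) (v w : Fin m × Fin n) : Kz m n v w = - Kz m n w v := by
  rw [Kz_apply, Kz_apply, Qz_anti n v.2 w.2, Qz_anti m v.1 w.1]
  by_cases h1 : v.1 = w.1 <;> by_cases h2 : v.2 = w.2 <;> simp [h1, h2, eq_comm]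
  ring

lemma grid_adj (m n : ℕ) (v w : Fin m × Fin n) : (gridGraph m n).Adj v w ↔
    (v.1.val = w.1.val ∧ (v.2.val + 1 = w.2.val ∨ w.2.val + 1 = v.2.val)) ∨
    (v.2.val = w.2.val ∧ (v.1.val + 1 = w.1.val ∨ w.1.val + 1 = v.1.val)) := by
  obtain ⟨a, b⟩ := v
  obtain ⟨c, d⟩ := w
  simp only [gridGraph, SimpleGraph.fromRel_adj, ne_eq, Prod.mk.injEq, Fin.ext_iff]
  omega

/-- numbering of the vertices -/
def tt {m n : ℕ} (v : Fin m × Fin n) : ℕ := v.2.val + n * v.1.val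

lemma Kz_nonadj (m n : ℕ) (v w : Fin m × Fin n) (h : ¬ (gridGraph m n).Adj v w) :
    Kz m n v w = 0 := by
  rw [grid_adj] at h
  rw [Kz_apply]
  unfold Qz
  simp only [Fin.ext_iff]
  split_ifs <;> omega

lemma tt_adj (m n : ℕ) (v w : Fin m × Fin n) (h : (gridGraph m n).Adj v w) :
    tt w = tt v + 1 ∨ tt v = tt w + 1 ∨ tt w = tt v + n ∨ tt v = tt w + n := by
  rw [grid_adj] at h
  unfold tt
  rcases h with ⟨h, h' | h'⟩ | ⟨h, h' | h'⟩
  · rw [h, ← h']; omega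
  · rw [h, ← h']; omega
  · rw [h, ← h']; right; right; left; ring
  · rw [h, ← h']; right; right; right; ring

lemma wt_h {a b : ℕ} (h : b = a + 1 ∨ a = b + 1) : wt a b = 1 := if_pos h

lemma wt_v {a b : ℕ} (h : ¬ (b = a + 1 ∨ a = b + 1)) : wt a b = (-1) ^ (max a b + 1) := if_neg h

lemma Kz_adj (m n : ℕ) (hn : 2 ≤ n) (hne : Even n) (v w : Fin m × Fin n)
    (h : (gridGraph m n).Adj v w) :
    Kz m n v w = sg (tt v) (tt w) * wt (tt v) (tt w) := by
  rw [grid_adj] at h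
  rw [Kz_apply]
  unfold Qz
  simp only [Fin.ext_iff]
  have hp : ∀ c r : ℕ, (-1 : ℤ) ^ (c + n * r + 1) = (-1) ^ (c + 1) := by
    intro c r
    rw [show c + n * r + 1 = (c + 1) + n * r by ring, pow_add, pow_mul, hne.neg_one_pow]; simp
  rcases h with ⟨h, h' | h'⟩ | ⟨h, h' | h'⟩
  · have e : tt w = tt v + 1 := by unfold tt; rw [h, ← h']; omega
    rw [sg_lt (by omega), wt_h (by omega)]
    simp [h, h']
  · have e : tt v = tt w + 1 := by unfold tt; rw [h, ← h']; omega
    rw [sg_gt (by omega), wt_h (by omega)]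
    simp [h, ← h']; omega
  · have e : tt w = tt v + n := by unfold tt; rw [h, ← h']; ring
    rw [sg_lt (by omega), wt_v (by omega), max_eq_right (by omega),
      show tt w = w.2.val + n * w.1.val from rfl, hp]
    simp [h, ← h']
  · have e : tt v = tt w + n := by unfold tt; rw [h, ← h']; ring
    rw [sg_gt (by omega), wt_v (by omega), max_eq_left (by omega),
      show tt v = v.2.val + n * v.1.val from rfl, hp]
    simp [h, ← h']
    omega

lemma count_matchings {V : Type*} [Fintype V] (G : SimpleGraph V) {k : ℕ}
    (e : Fin k ⊕ Fin k ≃ V)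
    (h1 : ∀ i j, ¬ G.Adj (e (Sum.inl i)) (e (Sum.inl j)))
    (h2 : ∀ i j, ¬ G.Adj (e (Sum.inr i)) (e (Sum.inr j))) :
    numPerfectMatchings G = Set.ncard
      {σ : Equiv.Perm (Fin k) | ∀ i, G.Adj (e (Sum.inl i)) (e (Sum.inr (σ i)))} := by
  unfold numPerfectMatchings
  symm
  refine Set.ncard_congr (fun σ hσ =>
    { verts := Set.univ
      Adj := fun v w => ∃ i, (v = e (Sum.inl i) ∧ w = e (Sum.inr (σ i))) ∨
        (w = e (Sum.inl i) ∧ v = e (Sum.inr (σ i)))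
      adj_sub := ?_
      edge_vert := fun _ => Set.mem_univ _
      symm := ?_ }) ?_ ?_ ?_
  · rintro v w ⟨i, ⟨rfl, rfl⟩ | ⟨rfl, rfl⟩⟩
    · exact hσ i
    · exact (hσ i).symm
  · refine ⟨?_⟩
    rintro v w ⟨i, h⟩
    exact ⟨i, h.symm⟩
  · intro σ hσ
    simp only [Set.mem_ofPred_eq]
    rw [SimpleGraph.Subgraph.isPerfectMatching_iff]
    intro v
    obtain ⟨v, rfl⟩ := e.surjective v
    rcases v with i | j
    · refine ⟨e (Sum.inr (σ i)), ⟨i, Or.inl ⟨rfl, rfl⟩⟩, ?_⟩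
      rintro w ⟨i', ⟨h, h'⟩ | ⟨h, h'⟩⟩
      · have := e.injective h
        simp only [Sum.inl.injEq] at this
        rw [h', this]
      · have := e.injective h'
        simp at this
    · refine ⟨e (Sum.inl (σ.symm j)), ⟨σ.symm j, Or.inr ⟨rfl, by simp⟩⟩, ?_⟩
      rintro w ⟨i', ⟨h, h'⟩ | ⟨h, h'⟩⟩
      · have := e.injective h
        simp at this
      · have := e.injective h'
        simp only [Sum.inr.injEq] at this
        rw [h, this]; simp
  · intro σ τ hσ hτ h
    ext i
    have hA := congrFun (congrFun (congrArg SimpleGraph.Subgraph.Adj h) (e (Sum.inl i)))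
      (e (Sum.inr (σ i)))
    simp only [eq_iff_iff] at hA
    obtain ⟨i', h | h⟩ := hA.1 ⟨i, Or.inl ⟨rfl, rfl⟩⟩
    · have a := e.injective h.1
      have b := e.injective h.2
      simp only [Sum.inl.injEq, Sum.inr.injEq] at a b
      rw [b, a]
    · have := e.injective h.1
      simp at this
  · intro M hM
    simp only [Set.mem_ofPred_eq] at hM
    rw [SimpleGraph.Subgraph.isPerfectMatching_iff] at hM
    have hex : ∀ i, ∃ j, M.Adj (e (Sum.inl i)) (e (Sum.inr j)) := by
      intro i
      obtain ⟨w, hw, -⟩ := hM (e (Sum.inl i))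
      obtain ⟨w, rfl⟩ := e.surjective w
      rcases w with j | j
      · exact absurd hw.adj_sub (h1 _ _)
      · exact ⟨j, hw⟩
    choose f hf using hex
    have hfi : Function.Injective f := by
      intro i j hij
      have a := (hf i).symm
      have b := (hf j).symm
      rw [← hij] at b
      have := e.injective ((hM _).unique a b)
      simpa using this
    refine ⟨Equiv.ofBijective f (Finite.injective_iff_bijective.1 hfi),
      fun i => (hf i).adj_sub, ?_⟩
    ext v w
    · simp only [Set.mem_univ, true_iff]
      obtain ⟨w, hw, -⟩ := hM v
      exact hw.fst_mem
    · simp only [Equiv.ofBijective_apply]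
      constructor
      · rintro ⟨i, ⟨rfl, rfl⟩ | ⟨rfl, rfl⟩⟩
        · exact hf i
        · exact (hf i).symm
      · intro h
        obtain ⟨v, rfl⟩ := e.surjective v
        obtain ⟨w, rfl⟩ := e.surjective w
        rcases v with i | i <;> rcases w with j | j
        · exact absurd h.adj_sub (h1 _ _)
        · exact ⟨i, Or.inl ⟨rfl, (hM _).unique h (hf i)⟩⟩
        · exact ⟨j, Or.inr ⟨rfl, (hM _).unique h.symm (hf j)⟩⟩
        · exact absurd h.adj_sub (h2 _ _)

/-- colour-splitting of the grid -/
lemma exists_split (m n : ℕ) (hne : Even n) : ∃ k : ℕ, ∃ e : Fin k ⊕ Fin k ≃ Fin m × Fin n,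
    (∀ i, ((e (Sum.inl i)).1.val + (e (Sum.inl i)).2.val) % 2 = 0) ∧
    (∀ i, ((e (Sum.inr i)).1.val + (e (Sum.inr i)).2.val) % 2 = 1) := by
  classical
  obtain ⟨h, rfl⟩ := hne
  let p : Fin m × Fin (h + h) → Prop := fun v => (v.1.val + v.2.val) % 2 = 0
  let fl : Fin m × Fin (h + h) → Fin m × Fin (h + h) := fun v =>
    (v.1, ⟨if v.2.val % 2 = 0 then v.2.val + 1 else v.2.val - 1, by
      have := v.2.isLt; split_ifs <;> omega⟩)
  have hfl : ∀ v, fl (fl v) = v := by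
    intro v
    refine Prod.ext rfl (Fin.ext ?_)
    simp only [fl]
    split_ifs <;> omega
  have hp : ∀ v, p v ↔ ¬ p (fl v) := by
    intro v
    simp only [p, fl]
    split_ifs <;> omega
  let E : {v // p v} ≃ {v // ¬ p v} :=
    { toFun := fun v => ⟨fl v.1, (hp _).1 v.2⟩
      invFun := fun v => ⟨fl v.1, by rw [hp, hfl]; exact v.2⟩
      left_inv := fun v => Subtype.ext (hfl _)
      right_inv := fun v => Subtype.ext (hfl _) }
  let F := Fintype.equivFin {v // p v}
  refine ⟨_, (Equiv.sumCongr F.symm (F.symm.trans E)).trans (Equiv.sumCompl p), ?_, ?_⟩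
  · intro i
    exact (F.symm i).2
  · intro i
    have := (E (F.symm i)).2
    simp only [p] at this
    simp only [Equiv.trans_apply, Equiv.sumCongr_apply, Sum.map_inr, Equiv.sumCompl_apply_inr]
    omega

lemma tt_eq {m n : ℕ} (v : Fin m × Fin n) : tt v = (finProdFinEquiv v).val := rfl

lemma tt_inj {m n : ℕ} : Function.Injective (tt : Fin m × Fin n → ℕ) := by
  intro v w h
  rw [tt_eq, tt_eq] at h
  exact finProdFinEquiv.injective (Fin.ext h)

lemma prod_ind (N b : ℕ) (hb : b < N) : ∏ z : Fin N, ind z.val b = (-1) ^ b := by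
  rw [Fin.prod_univ_eq_prod_range (fun z => ind z b) N]
  unfold ind
  rw [← Finset.prod_filter, Finset.prod_const]
  congr 1
  rw [show Finset.filter (fun x => x < b) (Finset.range N) = Finset.range b by
    ext x; simp only [Finset.mem_filter, Finset.mem_range]; omega]
  simp

theorem count_pow (m n : ℕ) (hn : 2 ≤ n) (hne : Even n) :
    ((numPerfectMatchings (gridGraph m n) : ℕ) : ℤ) ^ 4 = (Kz m n * Kz m n).det := by
  classical
  obtain ⟨k, e, hb, hw⟩ := exists_split m n hne
  have n1 : ∀ i j, ¬ (gridGraph m n).Adj (e (Sum.inl i)) (e (Sum.inl j)) := by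
    intro i j h
    rw [grid_adj] at h
    have := hb i; have := hb j; omega
  have n2 : ∀ i j, ¬ (gridGraph m n).Adj (e (Sum.inr i)) (e (Sum.inr j)) := by
    intro i j h
    rw [grid_adj] at h
    have := hw i; have := hw j; omega
  rw [count_matchings _ e n1 n2]
  set x : Fin k → ℕ := fun i => tt (e (Sum.inl i)) with hx
  set w : Fin k → ℕ := fun i => tt (e (Sum.inr i)) with hw'
  have xi : Function.Injective x := fun i j h => by
    have := e.injective (tt_inj h); simpa using this
  have wi : Function.Injective w := fun i j h => by
    have := e.injective (tt_inj h); simpa using this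
  have xw : ∀ i j, x i ≠ w j := fun i j h => by
    have := e.injective (tt_inj h); simp at this
  obtain ⟨C, hC, hsign⟩ := sign_cross x w xi wi xw
  obtain ⟨M, hMd⟩ : ∃ M : Matrix (Fin k) (Fin k) ℤ,
      ∀ j i, M j i = Kz m n (e (Sum.inl i)) (e (Sum.inr j)) :=
    ⟨Matrix.of fun j i => Kz m n (e (Sum.inl i)) (e (Sum.inr j)), fun _ _ => rfl⟩
  have hterm : ∀ σ : Equiv.Perm (Fin k), (Equiv.Perm.sign σ : ℤ) * ∏ i, M (σ i) i =
      if (∀ i, (gridGraph m n).Adj (e (Sum.inl i)) (e (Sum.inr (σ i)))) then C else 0 := by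
    intro σ
    split_ifs with h
    · have hM : ∏ i, M (σ i) i = (∏ i, sg (x i) (w (σ i))) * ∏ i, wt (x i) (w (σ i)) := by
        rw [← Finset.prod_mul_distrib]
        exact Finset.prod_congr rfl fun i _ => (hMd _ _).trans (Kz_adj m n hn hne _ _ (h i))
      have hcr := cross_prod (n := n) hn x (fun i => w (σ i)) xi (wi.comp σ.injective)
        (fun i j => xw i (σ j)) ?_ (fun i => tt_adj m n _ _ (h i))
      · rw [hM, ← mul_assoc, hsign σ, hcr, mul_assoc, prod_sq_one, mul_one]
        intro i _
        unfold wt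
        split_ifs
        · norm_num
        · rw [← mul_pow]; norm_num
      · intro i b hib
        have hlt : b < m * n := by
          rcases hib with rfl | rfl
          · exact (finProdFinEquiv (e (Sum.inl i))).isLt
          · exact (finProdFinEquiv (e (Sum.inr (σ i)))).isLt
        rw [← prod_ind (m * n) b hlt, ← Equiv.prod_comp finProdFinEquiv, ← Equiv.prod_comp e,
          Fintype.prod_sum_type, Finset.prod_mul_distrib]
        congr 1
        exact Equiv.prod_comp σ (fun i => ind (w i) b)
    · push Not at h
      obtain ⟨i, hi⟩ := h
      have h0 : ∏ i, M (σ i) i = 0 := Finset.prod_eq_zero (i := i) (Finset.mem_univ i)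
        ((hMd _ _).trans (Kz_nonadj _ _ _ _ hi))
      rw [h0, mul_zero]
  have hdet : M.det = C * (Set.ncard
      {σ : Equiv.Perm (Fin k) | ∀ i, (gridGraph m n).Adj (e (Sum.inl i)) (e (Sum.inr (σ i)))} : ℕ) := by
    rw [Matrix.det_apply', Finset.sum_congr rfl (fun σ _ => (by simpa using hterm σ)), ← Finset.sum_filter,
      Finset.sum_const, Set.ncard_eq_toFinset_card', nsmul_eq_mul, mul_comm]
    congr 3
    ext; simp
  have hblock : (Kz m n).submatrix e e = Matrix.fromBlocks 0 M.transpose (-M) 0 := by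
    ext i j
    rcases i with i | i <;> rcases j with j | j
    · simpa using Kz_nonadj _ _ _ _ (n1 i j)
    · simp [hMd]
    · simp only [Matrix.submatrix_apply, Matrix.fromBlocks_apply₂₁, Matrix.neg_apply, hMd]
      exact Kz_anti _ _ _ _
    · simpa using Kz_nonadj _ _ _ _ (n2 i j)
  rw [← Matrix.det_submatrix_equiv_self e, ← Matrix.submatrix_mul_equiv _ _ e e e, hblock,
    Matrix.fromBlocks_multiply]
  simp only [Matrix.zero_mul, Matrix.mul_zero, zero_add, add_zero]
  rw [Matrix.det_fromBlocks_zero₂₁, Matrix.det_mul, Matrix.det_mul, Matrix.det_transpose,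
    Matrix.det_neg, hdet]
  set N : ℤ := ((Set.ncard
      {σ : Equiv.Perm (Fin k) | ∀ i, (gridGraph m n).Adj (e (Sum.inl i)) (e (Sum.inr (σ i)))} : ℕ) : ℤ)
  have ho : ((-1 : ℤ) ^ Fintype.card (Fin k)) * ((-1 : ℤ) ^ Fintype.card (Fin k)) = 1 := by
    rw [← mul_pow]; norm_num
  generalize (-1 : ℤ) ^ Fintype.card (Fin k) = o at *
  calc N ^ 4 = (C * C) * (C * C) * (o * o) * N ^ 4 := by rw [hC, ho]; ring
    _ = _ := by ring

lemma Qz_EQ (n : ℕ) : Qz n * Ez n = - (Ez n * Qz n) := by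
  ext c d
  unfold Ez
  rw [Matrix.neg_apply, Matrix.mul_diagonal, Matrix.diagonal_mul]
  unfold Qz
  split_ifs with h h
  · rw [← h, pow_succ _ (c.val + 1)]; ring
  · rw [← h, pow_succ _ (d.val + 1)]; ring
  · simp

lemma Ez_sq (n : ℕ) : Ez n * Ez n = 1 := by
  unfold Ez
  rw [Matrix.diagonal_mul_diagonal, ← Matrix.diagonal_one]
  congr 1
  ext c
  rw [← mul_pow]; norm_num

lemma Kz_sq (m n : ℕ) : Kz m n * Kz m n =
    (1 : Matrix (Fin m) (Fin m) ℤ) ⊗ₖ (Qz n * Qz n) +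
      (Qz m * Qz m) ⊗ₖ (1 : Matrix (Fin n) (Fin n) ℤ) := by
  unfold Kz
  rw [add_mul, mul_add, mul_add, ← Matrix.mul_kronecker_mul, ← Matrix.mul_kronecker_mul,
    ← Matrix.mul_kronecker_mul, ← Matrix.mul_kronecker_mul, Qz_EQ, Ez_sq, Matrix.one_mul,
    Matrix.one_mul, Matrix.mul_one]
  have : Qz m ⊗ₖ (-(Ez n * Qz n)) = - (Qz m ⊗ₖ (Ez n * Qz n)) := by
    ext; simp [Matrix.kroneckerMap_apply]
  rw [this]; abel

/-- complex version -/
noncomputable def Qc (n : ℕ) : Matrix (Fin n) (Fin n) ℂ := (Qz n).map (fun z : ℤ => (z : ℂ))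

lemma Qc_sum (n : ℕ) (g : ℕ → ℂ) (h0 : g 0 = 0) (h1 : g (n + 1) = 0) (c : Fin n) :
    ∑ d, Qc n c d * g (d.val + 1) = g (c.val + 2) - g c.val := by
  have e : ∀ d : Fin n, Qc n c d * g (d.val + 1) =
      (if d.val = c.val + 1 then g (c.val + 2) else 0) - (if d.val + 1 = c.val then g c.val else 0) := by
    intro d
    simp only [Qc, Qz, Matrix.map_apply]
    by_cases h : c.val + 1 = d.val
    · have h' : ¬ (d.val + 1 = c.val) := by omega
      simp [h, h']
      rw [← h]
    · by_cases h' : d.val + 1 = c.val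
      · rw [if_neg h, if_pos h', if_neg (by omega), if_pos h', h']; simp
      · rw [if_neg h, if_neg h', if_neg (by omega), if_neg h']; simp
  rw [Finset.sum_congr rfl (fun d _ => e d), Finset.sum_sub_distrib]
  congr 1
  · by_cases h : c.val + 1 < n
    · rw [Finset.sum_eq_single (⟨c.val + 1, h⟩ : Fin n)]
      · simp
      · intro b _ hb
        rw [if_neg]; intro hh; exact hb (Fin.ext hh)
      · simp
    · have : c.val + 2 = n + 1 := by omega
      rw [this, h1]; simp
  · by_cases h : c.val = 0
    · rw [h, h0]; simp
    · rw [Finset.sum_eq_single (⟨c.val - 1, by omega⟩ : Fin n)]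
      · rw [if_pos]; simp only; omega
      · intro b _ hb
        rw [if_neg]; intro hh; apply hb; apply Fin.ext; simp only; omega
      · simp

/-- angle -/
noncomputable def th (n j : ℕ) : ℝ := π * ((j : ℝ)) / (n + 1)

/-- eigenvector entries -/
noncomputable def gg (n j k : ℕ) : ℂ := Complex.I ^ k * ((Real.sin (th n j * k) : ℝ) : ℂ)

/-- eigenvalues -/
noncomputable def mu (n j : ℕ) : ℂ := Complex.I * ((2 * Real.cos (th n j) : ℝ) : ℂ)

lemma gg_rec (n j k : ℕ) : gg n j (k + 2) - gg n j k = mu n j * gg n j (k + 1) := by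
  unfold gg mu
  have h : Real.sin (th n j * ((k + 2 : ℕ) : ℝ)) + Real.sin (th n j * (k : ℝ)) =
      2 * Real.cos (th n j) * Real.sin (th n j * ((k + 1 : ℕ) : ℝ)) := by
    push_cast
    rw [show th n j * ((k : ℝ) + 2) = th n j * (k + 1) + th n j by ring,
      show th n j * (k : ℝ) = th n j * (k + 1) - th n j by ring, Real.sin_add, Real.sin_sub]
    ring
  have h' := congrArg (fun r : ℝ => (r : ℂ)) h
  simp only [Complex.ofReal_add, Complex.ofReal_mul] at h'
  rw [pow_add, pow_add, Complex.I_sq, pow_one]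
  rw [Complex.ofReal_mul 2]
  linear_combination (-(Complex.I ^ k)) * h' + Complex.I ^ k * (((2 : ℝ) : ℂ)) *
    ((Real.cos (th n j) : ℝ) : ℂ) * ((Real.sin (th n j * ((k + 1 : ℕ) : ℝ)) : ℝ) : ℂ) *
    (-Complex.I_sq)

lemma gg_zero (n j : ℕ) : gg n j 0 = 0 := by simp [gg]

lemma gg_end (n j : ℕ) : gg n j (n + 1) = 0 := by
  have : th n j * ((n + 1 : ℕ) : ℝ) = j * π := by
    unfold th; push_cast; field_simp
  unfold gg
  rw [this, Real.sin_nat_mul_pi]; simp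

/-- eigenvector matrix -/
noncomputable def Pm (n : ℕ) : Matrix (Fin n) (Fin n) ℂ :=
  Matrix.of fun k j => gg n (j.val + 1) (k.val + 1)

lemma Qc_Pm (n : ℕ) : Qc n * Pm n = Pm n * Matrix.diagonal (fun j : Fin n => mu n (j.val + 1)) := by
  ext c j
  rw [Matrix.mul_diagonal, Matrix.mul_apply]
  simp only [Pm, Matrix.of_apply]
  rw [Qc_sum n (gg n (j.val + 1)) (gg_zero _ _) (gg_end _ _), gg_rec, mul_comm]

lemma th_mem (n : ℕ) (j : Fin n) : 0 < th n (j.val + 1) ∧ th n (j.val + 1) < π := by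
  have hj : (((j.val + 1 : ℕ)) : ℝ) < n + 1 := by
    have := j.isLt
    exact_mod_cast Nat.succ_lt_succ this
  unfold th
  constructor
  · positivity
  · rw [div_lt_iff₀ (by positivity)]
    exact mul_lt_mul_of_pos_left hj Real.pi_pos

lemma mu_inj (n : ℕ) : Function.Injective (fun j : Fin n => mu n (j.val + 1)) := by
  intro i j h
  simp only [mu] at h
  have h1 := mul_left_cancel₀ Complex.I_ne_zero h
  have h2 : Real.cos (th n (i.val + 1)) = Real.cos (th n (j.val + 1)) := by
    have := Complex.ofReal_injective h1
    linarith
  have h3 := Real.injOn_cos ⟨(th_mem n i).1.le, (th_mem n i).2.le⟩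
    ⟨(th_mem n j).1.le, (th_mem n j).2.le⟩ h2
  unfold th at h3
  have hpos : (n : ℝ) + 1 ≠ 0 := by positivity
  have h4 : (((i.val + 1 : ℕ)) : ℝ) = ((j.val + 1 : ℕ) : ℝ) := by
    have := Real.pi_ne_zero
    field_simp at h3
    exact h3
  have h5 : i.val + 1 = j.val + 1 := by exact_mod_cast h4
  exact Fin.ext (by omega)

lemma Pm_det (n : ℕ) : (Pm n).det ≠ 0 := by
  have hli : LinearIndependent ℂ (Pm n).col := by
    refine Module.End.eigenvectors_linearIndependent' (Matrix.toLin' (Qc n)) _ (mu_inj n) _ ?_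
    intro j
    refine ⟨?_, ?_⟩
    · rw [Module.End.mem_eigenspace_iff, Matrix.toLin'_apply]
      ext c
      have := congrFun (congrFun (Qc_Pm n) c) j
      rw [Matrix.mul_diagonal, Matrix.mul_apply] at this
      simp only [Matrix.mulVec, dotProduct, Matrix.col_apply, Pi.smul_apply, smul_eq_mul]
      rw [this, mul_comm]
    · intro h
      have h0 := congrFun h (⟨0, by have := j.isLt; omega⟩ : Fin n)
      simp only [Matrix.col_apply, Pm, Matrix.of_apply, gg, Pi.zero_apply, zero_add, pow_one,
        mul_eq_zero, Complex.I_ne_zero, false_or, Nat.cast_one, mul_one,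
        Complex.ofReal_eq_zero] at h0
      exact (Real.sin_pos_of_pos_of_lt_pi (th_mem n j).1 (th_mem n j).2).ne' h0
  rw [Matrix.linearIndependent_cols_iff_isUnit, Matrix.isUnit_iff_isUnit_det] at hli
  exact hli.ne_zero

lemma Qc_sq_Pm (n : ℕ) : (Qc n * Qc n) * Pm n =
    Pm n * Matrix.diagonal (fun j : Fin n => mu n (j.val + 1) ^ 2) := by
  rw [Matrix.mul_assoc, Qc_Pm, ← Matrix.mul_assoc, Qc_Pm, Matrix.mul_assoc,
    Matrix.diagonal_mul_diagonal]
  simp only [sq]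

lemma det_Kc (m n : ℕ) : ((1 : Matrix (Fin m) (Fin m) ℂ) ⊗ₖ (Qc n * Qc n) +
      (Qc m * Qc m) ⊗ₖ (1 : Matrix (Fin n) (Fin n) ℂ)).det =
    ∏ j : Fin m, ∏ k : Fin n, (mu m (j.val + 1) ^ 2 + mu n (k.val + 1) ^ 2) := by
  have hP : (Pm m ⊗ₖ Pm n).det ≠ 0 := by
    rw [Matrix.det_kronecker]
    exact mul_ne_zero (pow_ne_zero _ (Pm_det m)) (pow_ne_zero _ (Pm_det n))
  have hD : ((1 : Matrix (Fin m) (Fin m) ℂ) ⊗ₖ (Qc n * Qc n) +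
      (Qc m * Qc m) ⊗ₖ (1 : Matrix (Fin n) (Fin n) ℂ)) * (Pm m ⊗ₖ Pm n) =
      (Pm m ⊗ₖ Pm n) * Matrix.diagonal (fun p : Fin m × Fin n =>
        mu m (p.1.val + 1) ^ 2 + mu n (p.2.val + 1) ^ 2) := by
    rw [add_mul, ← Matrix.mul_kronecker_mul, ← Matrix.mul_kronecker_mul, Qc_sq_Pm, Qc_sq_Pm,
      Matrix.one_mul, Matrix.one_mul]
    ext ⟨a, b⟩ ⟨c, d⟩
    rw [Matrix.mul_diagonal, Matrix.add_apply]
    simp only [Matrix.kroneckerMap_apply, Matrix.mul_diagonal]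
    ring
  have := congrArg Matrix.det hD
  rw [Matrix.det_mul, Matrix.det_mul, mul_comm, Matrix.det_diagonal, Fintype.prod_prod_type] at this
  exact mul_left_cancel₀ hP this

lemma det_Kz (m n : ℕ) : (((Kz m n * Kz m n).det : ℤ) : ℂ) =
    ∏ j : Fin m, ∏ k : Fin n, (mu m (j.val + 1) ^ 2 + mu n (k.val + 1) ^ 2) := by
  have hq : ∀ n : ℕ, (Qz n * Qz n).map (Int.castRingHom ℂ) = Qc n * Qc n := by
    intro n
    rw [Matrix.map_mul]; rfl
  rw [← det_Kc, ← hq, ← hq, Kz_sq, ← eq_intCast (Int.castRingHom ℂ), RingHom.map_det]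
  congr 1
  ext ⟨a, b⟩ ⟨c, d⟩
  simp [Matrix.kroneckerMap_apply, Matrix.one_apply]

lemma half_prod (h : ℕ) (f : ℕ → ℝ) (hf : ∀ i, i < h → f (h + h - i) = f (i + 1)) :
    ∏ j : Fin (h + h), f (j.val + 1) = (∏ j ∈ Finset.Icc 1 h, f j) ^ 2 := by
  rw [Fin.prod_univ_eq_prod_range (fun j => f (j + 1)), Finset.prod_range_add, sq]
  have e : ∏ j ∈ Finset.Icc 1 h, f j = ∏ j ∈ Finset.range h, f (j + 1) := by
    symm
    refine Finset.prod_nbij' (fun i => i + 1) (fun i => i - 1) ?_ ?_ ?_ ?_ ?_ <;>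
      simp only [Finset.mem_range, Finset.mem_Icc] <;> intros <;> first | omega | trivial
  rw [e]
  congr 1
  rw [← Finset.prod_range_reflect]
  refine Finset.prod_congr rfl fun i hi => ?_
  rw [Finset.mem_range] at hi
  rw [← hf i hi]
  congr 1
  omega

lemma cos_refl (n j : ℕ) (hj : j ≤ n + 1) :
    Real.cos (th n (n + 1 - j)) ^ 2 = Real.cos (th n j) ^ 2 := by
  have : th n (n + 1 - j) = π - th n j := by
    unfold th
    rw [Nat.cast_sub hj]
    push_cast
    field_simp
  rw [this, Real.cos_pi_sub]; ring

end Kast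

/-- Kasteleyn's product formula: for m and n positive even integers, the
number of perfect matchings of the m-by-n grid graph equals
∏_{j=1}^{m/2} ∏_{k=1}^{n/2} (4cos²(πj/(m+1)) + 4cos²(πk/(n+1))). -/
theorem numPerfectMatchings_eq_prod (m n : ℕ) (hm : 0 < m) (hn : 0 < n)
    (hme : Even m) (hne : Even n) :
    (numPerfectMatchings (gridGraph m n) : ℝ) =
      ∏ j ∈ Finset.Icc 1 (m / 2), ∏ k ∈ Finset.Icc 1 (n / 2),
        (4 * Real.cos (π * j / (m + 1)) ^ 2 +
          4 * Real.cos (π * k / (n + 1)) ^ 2) := by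
  obtain ⟨a, rfl⟩ := hme
  obtain ⟨b, rfl⟩ := hne
  have h1 := Kast.count_pow (a + a) (b + b) (by omega) ⟨b, rfl⟩
  have h2 := Kast.det_Kz (a + a) (b + b)
  rw [← h1] at h2
  set N := numPerfectMatchings (gridGraph (a + a) (b + b))
  have h3 : ((N : ℝ)) ^ 4 = ∏ j : Fin (a + a), ∏ k : Fin (b + b),
      (4 * Real.cos (Kast.th (a + a) (j.val + 1)) ^ 2 +
        4 * Real.cos (Kast.th (b + b) (k.val + 1)) ^ 2) := by
    apply Complex.ofReal_injective
    push_cast at h2 ⊢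
    rw [h2]
    refine Finset.prod_congr rfl fun j _ => ?_
    have : ∀ k : Fin (b + b), Kast.mu (a + a) (j.val + 1) ^ 2 + Kast.mu (b + b) (k.val + 1) ^ 2 =
        (-1) * (4 * Complex.cos (Kast.th (a + a) (j.val + 1)) ^ 2 +
        4 * Complex.cos (Kast.th (b + b) (k.val + 1)) ^ 2) := by
      intro k
      unfold Kast.mu
      push_cast
      linear_combination (4 * Complex.cos (Kast.th (a + a) (j.val + 1)) ^ 2 +
        4 * Complex.cos (Kast.th (b + b) (k.val + 1)) ^ 2) * Complex.I_sq
    rw [Finset.prod_congr rfl (fun k _ => this k), Finset.prod_mul_distrib, Finset.prod_const,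
      Finset.card_univ, Fintype.card_fin, Even.neg_one_pow ⟨b, rfl⟩, one_mul]
  have h4 : ((N : ℝ)) ^ 4 = (∏ j ∈ Finset.Icc 1 a, ∏ k ∈ Finset.Icc 1 b,
      (4 * Real.cos (Kast.th (a + a) j) ^ 2 + 4 * Real.cos (Kast.th (b + b) k) ^ 2)) ^ 4 := by
    rw [h3]
    have hk : ∀ j : ℕ, ∏ k : Fin (b + b), (4 * Real.cos (Kast.th (a + a) j) ^ 2 +
        4 * Real.cos (Kast.th (b + b) (k.val + 1)) ^ 2) =
        (∏ k ∈ Finset.Icc 1 b, (4 * Real.cos (Kast.th (a + a) j) ^ 2 +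
          4 * Real.cos (Kast.th (b + b) k) ^ 2)) ^ 2 := by
      intro j
      refine Kast.half_prod b (fun k => 4 * Real.cos (Kast.th (a + a) j) ^ 2 +
          4 * Real.cos (Kast.th (b + b) k) ^ 2) ?_
      intro i hi
      rw [← Kast.cos_refl (b + b) (i + 1) (by omega)]
      congr 5; omega
    rw [Finset.prod_congr rfl (fun j _ => hk (j.val + 1)), Finset.prod_pow]
    rw [Kast.half_prod a (fun j => ∏ k ∈ Finset.Icc 1 b, (4 * Real.cos (Kast.th (a + a) j) ^ 2 +
          4 * Real.cos (Kast.th (b + b) k) ^ 2))]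
    · ring
    intro i hi
    refine Finset.prod_congr rfl fun k _ => ?_
    rw [← Kast.cos_refl (a + a) (i + 1) (by omega)]
    congr 5; omega
  have h5 := (pow_left_inj₀ (by positivity) (Finset.prod_nonneg fun j _ =>
    Finset.prod_nonneg fun k _ => by positivity) (by norm_num)).1 h4
  rw [h5, show (a + a) / 2 = a by omega, show (b + b) / 2 = b by omega]
  unfold Kast.th
  push_cast
  rfl
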